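/- There exists a constant C > 0 such that for every n ≥ 1 and every initial configuration w ∈ W_{2n}, the expected convergence time of the cooling process started at w₀ = w satisfies E[T | w₀ = w] ≤ C·n³. In particular, the worst expected convergence time max_{w ∈ W_{2n}} E[T | w₀ = w] is O(n³). -/

import Mathlib

open scoped BigOperators ENNReal

attribute [local instance] Classical.propDecidable

namespace Cooling

/-- Words over the alphabet `{1,2}`, modeled as lists of booleans:
`true` encodes the letter `1`, `false` encodes the letter `2`. -/
abbrev Word := List Bool

/-- `w` is a configuration of length `2*n`: a word of length `2*n` with as many
occurrences of the letter `1` (`true`) as of the letter `2` (`false`). -/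
def IsConfig (n : ℕ) (w : Word) : Prop :=
  w.length = 2 * n ∧ w.count true = n

/-- The (finite) set `W_{2n}` of all configurations of length `2*n`. -/
def configSet (n : ℕ) : Finset Word :=
  ((Finset.univ : Finset (Fin (2 * n) → Bool)).image List.ofFn).filter
    (fun w => w.count true = n)

/-- The number `E(w)` of mismatches of `w`: positions `i` with `w_i = w_{i+1}`. -/
def mismatches (w : Word) : ℕ :=
  (w.zip w.tail).countP (fun p => p.1 == p.2)

/-- The number `F(w)` of flips performable on `w`: positions `i` with `w_i ≠ w_{i+1}`. -/
def flipCount (w : Word) : ℕ :=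
  (w.zip w.tail).countP (fun p => p.1 != p.2)

/-- The word `w^{(i)}` obtained from `w` by exchanging the letters at positions
`i` and `i+1` (0-indexed). -/
def flip (w : Word) (i : ℕ) : Word :=
  (w.set i (w.getD (i + 1) true)).set (i + 1) (w.getD i true)

/-- A flip is permitted at position `i` if both positions `i` and `i+1` exist and the
corresponding letters are different. -/
def CanFlip (w : Word) (i : ℕ) : Prop :=
  i + 1 < w.length ∧ w.getD i true ≠ w.getD (i + 1) true

/-- The set of positions at which a flip is allowed in the cooling process:
positions of permitted flips which do not increase the number of mismatches. -/
noncomputable def allowedFlips (w : Word) : Finset ℕ :=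
  (Finset.range w.length).filter
    (fun i => CanFlip w i ∧ mismatches (flip w i) ≤ mismatches w)

/-- One step of the cooling process: if `E(w) = 0`, stay at `w`; otherwise, perform
a flip chosen uniformly at random among the flips which do not increase the number
of mismatches. -/
noncomputable def coolStep (w : Word) : PMF Word :=
  if h : mismatches w ≠ 0 ∧ (allowedFlips w).Nonempty then
    (PMF.uniformOfFinset (allowedFlips w) h.2).map (flip w)
  else
    PMF.pure w

/-- The distribution of the cooling process at time `t`, started from `w`. -/
noncomputable def coolDist (w : Word) : ℕ → PMF Word
  | 0 => PMF.pure w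
  | t + 1 => (coolDist w t).bind coolStep

/-- The expected convergence time `E[T | w₀ = w]` of the cooling process started at `w`,
where `T = min {t ≥ 0 : E(w_t) = 0}`.  Since mismatch-free configurations are absorbing,
`E[T] = ∑_{t ≥ 0} P(T > t) = ∑_{t ≥ 0} P(E(w_t) ≠ 0)`. -/
noncomputable def expConvTime (w : Word) : ℝ≥0∞ :=
  ∑' t : ℕ, (coolDist w t).toOuterMeasure {v | mismatches v ≠ 0}

/-- The factor of `w` starting at position `s` (0-indexed) of length `l`. -/
def factor (w : Word) (s l : ℕ) : Word := (w.drop s).take l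

/-- The height `|p|₁ - |p|₂` of the length-`s` prefix `p` of `w`. -/
def height (w : Word) (s : ℕ) : ℤ :=
  ((w.take s).count true : ℤ) - (w.take s).count false

/-- The occurrence `(s, l)` is a positive Dyck factor of `w`. -/
def IsPosDyckAt (w : Word) (s l : ℕ) : Prop :=
  0 < l ∧ s + l ≤ w.length ∧
  (factor w s l).count true = (factor w s l).count false ∧
  (∀ i ≤ l, ((factor w s l).take i).count false ≤ ((factor w s l).take i).count true) ∧
  0 ≤ height w s

/-- The occurrence `(s, l)` is a negative Dyck factor of `w`. -/
def IsNegDyckAt (w : Word) (s l : ℕ) : Prop :=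
  0 < l ∧ s + l ≤ w.length ∧
  (factor w s l).count true = (factor w s l).count false ∧
  (∀ i ≤ l, ((factor w s l).take i).count true ≤ ((factor w s l).take i).count false) ∧
  height w s ≤ 0

/-- The occurrence `(s, l)` is a Dyck factor of `w` (positive or negative). -/
def IsDyckAt (w : Word) (s l : ℕ) : Prop :=
  IsPosDyckAt w s l ∨ IsNegDyckAt w s l

/-- The occurrence `(s, l)` is a maximal Dyck factor of `w`: no Dyck factor of `w`
with the same height contains it (other than itself). -/
def IsMaxDyckAt (w : Word) (s l : ℕ) : Prop :=
  IsDyckAt w s l ∧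
  ∀ s' l', IsDyckAt w s' l' → height w s' = height w s → s' ≤ s → s + l ≤ s' + l' →
    s' = s ∧ l' = l

/-- The set `DF(w)` of (occurrences of) maximal Dyck factors of `w`,
encoded as pairs (starting position, length). -/
noncomputable def DF (w : Word) : Finset (ℕ × ℕ) :=
  ((Finset.range (w.length + 1)) ×ˢ (Finset.range (w.length + 1))).filter
    (fun sl => IsMaxDyckAt w sl.1 sl.2)

/-- The variant `φ_α(w) = ∑_{v ∈ DF(w)} (1 + |v|₁)^α`. -/
noncomputable def phi (α : ℝ) (w : Word) : ℝ :=
  ∑ sl ∈ DF w, (1 + ((factor w sl.1 sl.2).count true : ℝ)) ^ α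

/-- The volume `V(w) = (1/2) ∑_{k=1}^{|w|} |h_{k-1}(w) + h_k(w)|`: the area between
the broken-line representation of `w` and the horizontal axis. -/
noncomputable def volume (w : Word) : ℝ :=
  (1 / 2) * ∑ k ∈ Finset.range w.length, |((height w k + height w (k + 1) : ℤ) : ℝ)|

/-!
Draw a word as a lattice path. The potential is the sum over all levels of the number of pairs of
unit cells separated by a crossing of that level, a crossing being a time at which the path passes
straight through; the crossings are the mismatches of the word. A flip at a local extremum `j`
toggles the membership of `j - 1` and `j + 1` in the crossings of a single level, so it moves a
crossing by two steps or annihilates a pair of them (creating a pair is what the cooling process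
forbids). Let the force on a crossing be the length of the gap to its right minus that of the gap to
its left, within its level. Then the flip changes the potential by at most
`2 (force (j - 1) - force (j + 1)) - 4`.

The force is antitone along straight runs of the path, because between two visits to a level the
path recrosses the next one. Summed over the allowed flips, the force differences therefore
telescope to something nonpositive, and the potential has mean drift at most `-4`. It is `O(n³)`
initially, so the additive drift theorem gives the claim.
-/

section Separation

open Finset
open scoped symmDiff

variable {lo hi p p' j : ℤ} {C C' D : Finset ℤ}

/-- The pairs `x < y` of unit cells `[x, x + 1]` and `[y, y + 1]` of the window `[lo, hi]` that are
separated by a point of `C`. If `C` cuts the window into gaps `g₀, …, gₘ`, there are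
`∑_{a < b} g_a g_b` of them. -/
noncomputable def separatedPairs (lo hi : ℤ) (C : Finset ℤ) : Finset (ℤ × ℤ) :=
  {z ∈ Ico lo hi ×ˢ Ico lo hi | ∃ c ∈ C, z.1 < c ∧ c ≤ z.2}

/-- The first point of `C` after `p`, or the right end `hi` of the window if that comes first. -/
noncomputable def nextPt (hi : ℤ) (C : Finset ℤ) (p : ℤ) : ℤ :=
  (insert hi {c ∈ C | p < c}).min' (insert_nonempty _ _)

/-- The last point of `C` before `p`, or the left end `lo` of the window if that comes last. -/
noncomputable def prevPt (lo : ℤ) (C : Finset ℤ) (p : ℤ) : ℤ :=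
  (insert lo {c ∈ C | c < p}).max' (insert_nonempty _ _)

/-- For a point `p` of `C`, the length of the gap of `C` to the right of `p` minus the length of
the gap to its left; for any other `p`, zero. -/
noncomputable def pull (lo hi : ℤ) (C : Finset ℤ) (p : ℤ) : ℤ :=
  if p ∈ C then nextPt hi C p + prevPt lo C p - 2 * p else 0

lemma nextPt_eq_or_mem (hi : ℤ) (C : Finset ℤ) (p : ℤ) :
    nextPt hi C p = hi ∨ (nextPt hi C p ∈ C ∧ p < nextPt hi C p) := by
  simpa [nextPt] using min'_mem (insert hi {c ∈ C | p < c}) (insert_nonempty _ _)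

lemma nextPt_le_right (hi : ℤ) (C : Finset ℤ) (p : ℤ) : nextPt hi C p ≤ hi :=
  min'_le _ _ (by simp)

lemma nextPt_le_of_mem {c : ℤ} (hc : c ∈ C) (hpc : p < c) : nextPt hi C p ≤ c :=
  min'_le _ _ (by simp [hc, hpc])

lemma nextPt_congr (h : ∀ c, c ∈ C ∧ p < c ↔ c ∈ C' ∧ p' < c) :
    nextPt hi C p = nextPt hi C' p' := by
  have : ({c ∈ C | p < c} : Finset ℤ) = {c ∈ C' | p' < c} := by ext c; simpa using h c
  simp only [nextPt, this]

lemma prevPt_eq_or_mem (lo : ℤ) (C : Finset ℤ) (p : ℤ) :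
    prevPt lo C p = lo ∨ (prevPt lo C p ∈ C ∧ prevPt lo C p < p) := by
  simpa [prevPt] using max'_mem (insert lo {c ∈ C | c < p}) (insert_nonempty _ _)

lemma left_le_prevPt (lo : ℤ) (C : Finset ℤ) (p : ℤ) : lo ≤ prevPt lo C p :=
  le_max' _ _ (by simp)

lemma le_prevPt_of_mem {c : ℤ} (hc : c ∈ C) (hcp : c < p) : c ≤ prevPt lo C p :=
  le_max' _ _ (by simp [hc, hcp])

lemma prevPt_congr (h : ∀ c, c ∈ C ∧ c < p ↔ c ∈ C' ∧ c < p') :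
    prevPt lo C p = prevPt lo C' p' := by
  have : ({c ∈ C | c < p} : Finset ℤ) = {c ∈ C' | c < p'} := by ext c; simpa using h c
  simp only [prevPt, this]

lemma prevPt_eq_sub_nextPt {N : ℤ} (h : ∀ c, c ∈ C' ↔ N - c ∈ C) :
    prevPt lo C p = N - nextPt (N - lo) C' (N - p) := by
  apply le_antisymm
  · rcases prevPt_eq_or_mem lo C p with hl | ⟨hl, hlp⟩
    · linarith [nextPt_le_right (N - lo) C' (N - p)]
    · have hmem : N - prevPt lo C p ∈ C' := by rwa [h, sub_sub_cancel]
      linarith [nextPt_le_of_mem (hi := N - lo) hmem (sub_lt_sub_left hlp N)]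
  · rcases nextPt_eq_or_mem (N - lo) C' (N - p) with hr | ⟨hr, hpr⟩
    · linarith [left_le_prevPt lo C p]
    · exact le_prevPt_of_mem ((h _).1 hr) (by linarith)

lemma separatedPairs_congr (h : ∀ c, lo < c → c < hi → (c ∈ C ↔ c ∈ C')) :
    separatedPairs lo hi C = separatedPairs lo hi C' := by
  refine filter_congr fun z hz => exists_congr fun c => ?_
  simp only [mem_product, mem_Ico] at hz
  grind

lemma card_separatedPairs_le (h : lo ≤ hi) :
    (#(separatedPairs lo hi C) : ℤ) ≤ (hi - lo) ^ 2 := by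
  have hcard : #(separatedPairs lo hi C) ≤ #(Ico lo hi ×ˢ Ico lo hi) := card_filter_le _ _
  rw [card_product, Int.card_Ico] at hcard
  zify at hcard
  rwa [Int.toNat_of_nonneg (sub_nonneg.2 h), ← sq] at hcard

lemma separatedPairs_insert (lo hi : ℤ) (C : Finset ℤ) (p : ℤ) :
    separatedPairs lo hi (insert p C) =
      separatedPairs lo hi C ∪ Ico (prevPt lo C p) p ×ˢ Ico p (nextPt hi C p) := by
  have hl := left_le_prevPt lo C p
  have hr := nextPt_le_right hi C p
  ext ⟨x, y⟩
  simp only [separatedPairs, mem_filter, mem_union, mem_product, mem_Ico, exists_mem_insert]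
  constructor
  · rintro ⟨hxy, hsep | hsep⟩
    · by_cases hx : prevPt lo C p ≤ x
      · by_cases hy : y < nextPt hi C p
        · exact .inr (by omega)
        · have hmem := (nextPt_eq_or_mem hi C p).resolve_left (by omega)
          exact .inl ⟨hxy, _, hmem.1, by omega, by omega⟩
      · have hmem := (prevPt_eq_or_mem lo C p).resolve_left (by omega)
        exact .inl ⟨hxy, _, hmem.1, by omega, by omega⟩
    · exact .inl ⟨hxy, hsep⟩
  · rintro (⟨hxy, hsep⟩ | hxy)
    · exact ⟨hxy, .inr hsep⟩
    · exact ⟨by omega, .inl (by omega)⟩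

lemma disjoint_separatedPairs_gaps (hp : p ∉ C) :
    Disjoint (separatedPairs lo hi C) (Ico (prevPt lo C p) p ×ˢ Ico p (nextPt hi C p)) := by
  rw [disjoint_left]
  rintro ⟨x, y⟩ hsep hgap
  simp only [separatedPairs, mem_filter, mem_product, mem_Ico] at hsep hgap
  obtain ⟨-, c, hc, hxc, hcy⟩ := hsep
  rcases lt_trichotomy c p with hcp | rfl | hpc
  · linarith [le_prevPt_of_mem (lo := lo) hc hcp]
  · exact hp hc
  · linarith [nextPt_le_of_mem (hi := hi) hc hpc]

lemma card_separatedPairs_insert (hp : p ∉ C) (hlo : lo ≤ p) (hhi : p ≤ hi) :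
    (#(separatedPairs lo hi (insert p C)) : ℤ) =
      #(separatedPairs lo hi C) + (p - prevPt lo C p) * (nextPt hi C p - p) := by
  have hl : prevPt lo C p ≤ p := by have := prevPt_eq_or_mem lo C p; omega
  have hr : p ≤ nextPt hi C p := by have := nextPt_eq_or_mem hi C p; omega
  rw [separatedPairs_insert, card_union_of_disjoint (disjoint_separatedPairs_gaps hp),
    card_product, Int.card_Ico, Int.card_Ico]
  push_cast
  rw [Int.toNat_of_nonneg (sub_nonneg.2 hl), Int.toNat_of_nonneg (sub_nonneg.2 hr)]

lemma nextPt_eq_of_gap (hD : ∀ i ∈ D, i < j - 1 ∨ j + 1 < i) {i : ℤ} (hi₁ : j - 1 ≤ i)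
    (hi₂ : i ≤ j + 1) : nextPt hi D i = nextPt hi D j :=
  nextPt_congr (by grind)

lemma prevPt_eq_of_gap (hD : ∀ i ∈ D, i < j - 1 ∨ j + 1 < i) {i : ℤ} (hi₁ : j - 1 ≤ i)
    (hi₂ : i ≤ j + 1) : prevPt lo D i = prevPt lo D j :=
  prevPt_congr (by grind)

lemma pull_insert_of_gap (hD : ∀ i ∈ D, i < j - 1 ∨ j + 1 < i) {i : ℤ} (hi₁ : j - 1 ≤ i)
    (hi₂ : i ≤ j + 1) :
    pull lo hi (insert i D) i = nextPt hi D j + prevPt lo D j - 2 * i := by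
  rw [pull, if_pos (mem_insert_self _ _), nextPt_congr (C' := D) (p' := j) (by grind),
    prevPt_congr (C' := D) (p' := j) (by grind)]

lemma card_separatedPairs_insert_of_gap (hD : ∀ i ∈ D, i < j - 1 ∨ j + 1 < i) {i : ℤ}
    (hi₁ : j - 1 ≤ i) (hi₂ : i ≤ j + 1) (hlo : lo ≤ j - 1) (hhi : j + 1 ≤ hi) :
    (#(separatedPairs lo hi (insert i D)) : ℤ) =
      #(separatedPairs lo hi D) + (i - prevPt lo D j) * (nextPt hi D j - i) := by
  rw [card_separatedPairs_insert (by grind) (by linarith) (by linarith),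
    prevPt_eq_of_gap hD hi₁ hi₂, nextPt_eq_of_gap hD hi₁ hi₂]

lemma pull_of_notMem (hp : p ∉ C) : pull lo hi C p = 0 := if_neg hp

lemma card_separatedPairs_move_right (hD : ∀ i ∈ D, i < j - 1 ∨ j + 1 < i) (hlo : lo ≤ j - 1)
    (hhi : j + 1 ≤ hi) :
    (#(separatedPairs lo hi (insert (j + 1) D)) : ℤ) -
        #(separatedPairs lo hi (insert (j - 1) D)) =
      2 * pull lo hi (insert (j - 1) D) (j - 1) - 4 := by
  rw [pull_insert_of_gap hD (by omega) (by omega),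
    card_separatedPairs_insert_of_gap hD (by omega) (by omega) hlo hhi,
    card_separatedPairs_insert_of_gap hD (by omega) (by omega) hlo hhi]
  ring

lemma card_separatedPairs_move_left (hD : ∀ i ∈ D, i < j - 1 ∨ j + 1 < i) (hlo : lo ≤ j - 1)
    (hhi : j + 1 ≤ hi) :
    (#(separatedPairs lo hi (insert (j - 1) D)) : ℤ) -
        #(separatedPairs lo hi (insert (j + 1) D)) =
      -2 * pull lo hi (insert (j + 1) D) (j + 1) - 4 := by
  rw [pull_insert_of_gap hD (by omega) (by omega),
    card_separatedPairs_insert_of_gap hD (by omega) (by omega) hlo hhi,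
    card_separatedPairs_insert_of_gap hD (by omega) (by omega) hlo hhi]
  ring

lemma card_separatedPairs_annihilate_le (hD : ∀ i ∈ D, i < j - 1 ∨ j + 1 < i) (hlo : lo ≤ j - 1)
    (hhi : j + 1 ≤ hi) (hC : C = insert (j - 1) (insert (j + 1) D)) :
    (#(separatedPairs lo hi D) : ℤ) - #(separatedPairs lo hi C) ≤
      2 * (pull lo hi C (j - 1) - pull lo hi C (j + 1)) - 4 := by
  have hl : prevPt lo D j ≤ j - 1 := by grind [prevPt_eq_or_mem lo D j]
  have hr : j + 1 ≤ nextPt hi D j := by grind [nextPt_eq_or_mem hi D j]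
  have hnext : nextPt hi C (j - 1) = j + 1 := by
    apply le_antisymm (nextPt_le_of_mem (by simp [hC]) (by omega))
    grind [nextPt_eq_or_mem hi C (j - 1)]
  have hprev : prevPt lo C (j + 1) = j - 1 := by
    refine le_antisymm ?_ (le_prevPt_of_mem (by simp [hC]) (by omega))
    grind [prevPt_eq_or_mem lo C (j + 1)]
  have hprev' : prevPt lo C (j - 1) = prevPt lo D j := prevPt_congr (by grind)
  have hnext' : nextPt hi C (j + 1) = nextPt hi D j := nextPt_congr (by grind)
  have hcard : (#(separatedPairs lo hi C) : ℤ) = #(separatedPairs lo hi D) +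
      (j + 1 - prevPt lo D j) * (nextPt hi D j - (j + 1)) + (j - 1 - prevPt lo D j) * 2 := by
    rw [hC, card_separatedPairs_insert (by grind) (by omega) (by omega),
      nextPt_congr (C' := C) (p' := j - 1) (by grind), hnext,
      prevPt_congr (C' := C) (p' := j - 1) (by grind), hprev',
      card_separatedPairs_insert_of_gap hD (by omega) (by omega) hlo hhi]
    ring
  rw [hcard, pull, pull, if_pos (by simp [hC]), if_pos (by simp [hC]), hnext, hprev, hprev', hnext']
  nlinarith [mul_nonneg (sub_nonneg.2 hl) (sub_nonneg.2 hr)]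

theorem card_separatedPairs_symmDiff_le (hlo : lo ≤ j - 1) (hhi : j + 1 ≤ hi) (hj : j ∉ C)
    (hC : j - 1 ∈ C ∨ j + 1 ∈ C) :
    (#(separatedPairs lo hi (C ∆ {j - 1, j + 1})) : ℤ) - #(separatedPairs lo hi C) ≤
      2 * (pull lo hi C (j - 1) - pull lo hi C (j + 1)) - 4 := by
  obtain ⟨D, hDC⟩ : ∃ D, D = C \ {j - 1, j + 1} := ⟨_, rfl⟩
  have hD : ∀ i ∈ D, i < j - 1 ∨ j + 1 < i := by grind
  by_cases hl : j - 1 ∈ C <;> by_cases hr : j + 1 ∈ C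
  · rw [show C ∆ {j - 1, j + 1} = D by grind [mem_symmDiff]]
    exact card_separatedPairs_annihilate_le hD hlo hhi (by grind)
  · rw [show C ∆ {j - 1, j + 1} = insert (j + 1) D by grind [mem_symmDiff], pull_of_notMem hr,
      show C = insert (j - 1) D by grind, card_separatedPairs_move_right hD hlo hhi, sub_zero]
  · rw [show C ∆ {j - 1, j + 1} = insert (j - 1) D by grind [mem_symmDiff], pull_of_notMem hl,
      show C = insert (j + 1) D by grind, card_separatedPairs_move_left hD hlo hhi]
    linarith
  · exact absurd hC (by simp [hl, hr])

end Separation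

section Bridges

open Finset
open scoped symmDiff

variable {N i j k m H : ℤ} {h : ℤ → ℤ}

/-- A bridge of length `N`: a lattice path with steps `±1` from height `0` at time `0` to height `0`
at time `N`. Times are integers so that they can be reflected; the values of `h` outside `[0, N]`
are irrelevant. -/
structure IsBridge (N : ℤ) (h : ℤ → ℤ) : Prop where
  start : h 0 = 0
  finish : h N = 0
  step : ∀ k, 0 ≤ k → k < N → h (k + 1) = h k + 1 ∨ h (k + 1) = h k - 1

/-- The interior times at which a path is not at a local extremum. -/
noncomputable def straight (N : ℤ) (h : ℤ → ℤ) : Finset ℤ :=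
  {i ∈ Ioo 0 N | h (i - 1) ≠ h (i + 1)}

/-- The times at which a path crosses the level `H`. -/
noncomputable def crossings (N : ℤ) (h : ℤ → ℤ) (H : ℤ) : Finset ℤ :=
  {i ∈ straight N h | h i = H}

/-- The distance by which the window `[-margin N H, N + margin N H]`, in which the crossings of the
level `H` are considered, exceeds `[0, N]`. At level `0` the endpoints of the bridge bound the gaps;
at all other levels the outer gaps are made longer than any inner one. -/
def margin (N H : ℤ) : ℤ := if H = 0 then 0 else N

/-- The next crossing after time `i` of the level that the path occupies at time `i`, or the right
end of the window of that level. -/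
noncomputable def nextCrossing (N : ℤ) (h : ℤ → ℤ) (i : ℤ) : ℤ :=
  nextPt (N + margin N (h i)) (crossings N h (h i)) i

/-- The last crossing before time `i` of the level that the path occupies at time `i`, or the left
end of the window of that level. -/
noncomputable def prevCrossing (N : ℤ) (h : ℤ → ℤ) (i : ℤ) : ℤ :=
  prevPt (-margin N (h i)) (crossings N h (h i)) i

/-- The pull on the time `i` among the crossings of its own level. -/
noncomputable def force (N : ℤ) (h : ℤ → ℤ) (i : ℤ) : ℤ :=
  pull (-margin N (h i)) (N + margin N (h i)) (crossings N h (h i)) i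

lemma mem_straight : i ∈ straight N h ↔ (0 < i ∧ i < N) ∧ h (i - 1) ≠ h (i + 1) := by
  simp [straight]

lemma mem_crossings :
    i ∈ crossings N h H ↔ ((0 < i ∧ i < N) ∧ h (i - 1) ≠ h (i + 1)) ∧ h i = H := by
  simp [crossings, mem_straight]

lemma mem_crossings_self : i ∈ crossings N h (h i) ↔ i ∈ straight N h := by
  simp [crossings]

lemma margin_of_ne (hH : H ≠ 0) : margin N H = N := if_neg hH

lemma margin_nonneg (hN : 0 ≤ N) (H : ℤ) : 0 ≤ margin N H := by
  unfold margin; split_ifs <;> omega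

lemma margin_le (hN : 0 ≤ N) (H : ℤ) : margin N H ≤ N := by
  unfold margin; split_ifs <;> omega

lemma crossings_neg (N : ℤ) (h : ℤ → ℤ) (H : ℤ) :
    crossings N (fun i => -h i) H = crossings N h (-H) := by
  ext i
  rw [mem_crossings, mem_crossings, neg_inj.ne, neg_eq_iff_eq_neg]

lemma mem_crossings_reverse :
    i ∈ crossings N (fun k => h (N - k)) H ↔ N - i ∈ crossings N h H := by
  simp only [mem_crossings, sub_sub, ← sub_add]
  grind

lemma mem_straight_reverse : i ∈ straight N (fun k => h (N - k)) ↔ N - i ∈ straight N h := by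
  rw [← mem_crossings_self, ← mem_crossings_self, mem_crossings_reverse]

lemma prevCrossing_eq_sub_nextCrossing (N : ℤ) (h : ℤ → ℤ) (i : ℤ) :
    prevCrossing N h i = N - nextCrossing N (fun k => h (N - k)) (N - i) := by
  rw [prevCrossing, nextCrossing, sub_sub_cancel, ← sub_neg_eq_add N]
  exact prevPt_eq_sub_nextPt fun _ => mem_crossings_reverse

lemma force_of_mem (hi : i ∈ straight N h) :
    force N h i = nextCrossing N h i + prevCrossing N h i - 2 * i :=
  if_pos (mem_crossings_self.2 hi)

lemma force_of_notMem (hi : i ∉ straight N h) : force N h i = 0 :=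
  if_neg (mem_crossings_self.not.2 hi)

lemma force_reverse (N : ℤ) (h : ℤ → ℤ) (i : ℤ) :
    force N (fun k => h (N - k)) i = -force N h (N - i) := by
  by_cases hi : N - i ∈ straight N h
  · rw [force_of_mem hi, force_of_mem (mem_straight_reverse.2 hi),
      prevCrossing_eq_sub_nextCrossing N h, prevCrossing_eq_sub_nextCrossing N fun k => h (N - k)]
    simp only [sub_sub_cancel]
    ring
  · rw [force_of_notMem hi, force_of_notMem (mem_straight_reverse.not.2 hi), neg_zero]

namespace IsBridge

lemma step' (hp : IsBridge N h) (hk : 0 < k) (hkN : k ≤ N) :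
    h k = h (k - 1) + 1 ∨ h k = h (k - 1) - 1 := by
  simpa using hp.step (k - 1) (by omega) (by omega)

lemma neg (hp : IsBridge N h) : IsBridge N (fun k => -h k) where
  start := by simp [hp.start]
  finish := by simp [hp.finish]
  step k hk hkN := by have := hp.step k hk hkN; omega

lemma reverse (hp : IsBridge N h) : IsBridge N (fun k => h (N - k)) where
  start := by simp [hp.finish]
  finish := by simp [hp.start]
  step k hk hkN := by
    have := hp.step' (k := N - k) (by omega) (by omega)
    rw [← sub_sub]
    omega

lemma abs_apply_le (hp : IsBridge N h) (hk : 0 ≤ k) (hkN : k ≤ N) : |h k| ≤ k := by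
  induction k, hk using Int.leInduction with
  | base => simp [hp.start]
  | succ k hk ih => grind [hp.step k hk (by omega), ih (by omega)]

lemma exists_mem_crossings_of_lt (hp : IsBridge N h) (hk : 0 ≤ k) (hkm : k ≤ m) (hm : m ≤ N)
    (hkH : h k < H) (hmH : H < h m) : ∃ c ∈ crossings N h H, k < c ∧ c < m := by
  obtain ⟨a, ha, hmin⟩ := exists_min_image {a ∈ Icc k m | H < h a} id
    ⟨m, by simp [hkm, hmH]⟩
  have hle (b : ℤ) (hkb : k ≤ b) (hba : b < a) : h b ≤ H := by
    by_contra hb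
    exact hba.not_ge (hmin b (by grind))
  have hka : k < a := by grind
  have hstep := hp.step' (k := a) (by omega) (by grind)
  have hlast := hle (a - 1) (by omega) (by omega)
  have hka' : k ≠ a - 1 := by rintro rfl; grind
  have hstep' := hp.step' (k := a - 1) (by omega) (by grind)
  have := hle (a - 1 - 1) (by omega) (by omega)
  exact ⟨a - 1, mem_crossings.2 (by grind), by omega, by grind⟩

lemma exists_mem_crossings (hp : IsBridge N h) (hk : 0 ≤ k) (hkm : k ≤ m) (hm : m ≤ N)
    (hH : h k < H ∧ H < h m ∨ H < h k ∧ h m < H) : ∃ c ∈ crossings N h H, k < c ∧ c < m := by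
  rcases hH with ⟨hkH, hmH⟩ | ⟨hkH, hmH⟩
  · exact hp.exists_mem_crossings_of_lt hk hkm hm hkH hmH
  · simpa [crossings_neg] using
      hp.neg.exists_mem_crossings_of_lt (H := -H) hk hkm hm (neg_lt_neg hkH) (neg_lt_neg hmH)

/-- Between `i + 2` and its return to the level of `i`, the path recrosses the level of `i + 1`. -/
lemma nextCrossing_succ_le (hp : IsBridge N h) (hi : i + 1 ∈ straight N h) :
    nextCrossing N h (i + 1) ≤ nextCrossing N h i := by
  rw [mem_straight, add_sub_cancel_right, add_assoc, one_add_one_eq_two] at hi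
  have hle (r : ℤ) (hir : i < r) (hrN : r ≤ N) (hr : h r = h i) :
      nextCrossing N h (i + 1) ≤ r := by
    have hstep := hp.step i (by omega) (by omega)
    have hstep' := hp.step (i + 1) (by omega) (by omega)
    rw [add_assoc, one_add_one_eq_two] at hstep'
    have : i + 2 ≤ r := by grind
    obtain ⟨c, hc, hic, hcr⟩ := hp.exists_mem_crossings (H := h (i + 1)) (k := i + 2)
      (by grind) this hrN (by omega)
    exact (nextPt_le_of_mem hc (by omega)).trans hcr.le
  rcases nextPt_eq_or_mem (N + margin N (h i)) (crossings N h (h i)) i with hend | ⟨hmem, hlt⟩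
  · rw [nextCrossing.eq_def N h i, hend]
    by_cases hz : h i = 0
    · simpa [hz, margin] using hle N (by omega) le_rfl (hp.finish.trans hz.symm)
    · rw [margin_of_ne hz]
      exact (nextPt_le_right _ _ _).trans (by linarith [margin_le (by omega : 0 ≤ N) (h (i + 1))])
  · have := mem_crossings.1 hmem
    exact hle (nextPt _ _ _) hlt (by omega) this.2

lemma prevCrossing_succ_le (hp : IsBridge N h) (hi : i ∈ straight N h) :
    prevCrossing N h (i + 1) ≤ prevCrossing N h i := by
  have hi_rev : N - (i + 1) + 1 = N - i := by ring
  have hle := hp.reverse.nextCrossing_succ_le (i := N - (i + 1))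
    (mem_straight_reverse.2 (by rwa [hi_rev, sub_sub_cancel]))
  rw [hi_rev] at hle
  rw [prevCrossing_eq_sub_nextCrossing, prevCrossing_eq_sub_nextCrossing]
  linarith

lemma force_succ_le (hp : IsBridge N h) (hi : i ∈ straight N h) (hi' : i + 1 ∈ straight N h) :
    force N h (i + 1) ≤ force N h i := by
  rw [force_of_mem hi, force_of_mem hi']
  linarith [hp.nextCrossing_succ_le hi', hp.prevCrossing_succ_le hi]

lemma force_one_nonpos (hp : IsBridge N h) : force N h 1 ≤ 0 := by
  by_cases hs : (1 : ℤ) ∈ straight N h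
  · have hs' := mem_straight.1 hs
    have hstep := hp.step 0 le_rfl (by omega)
    have hstep' := hp.step 1 (by omega) (by omega)
    norm_num [hp.start] at hs' hstep hstep'
    have hprev : prevCrossing N h 1 = -N := by
      rw [prevCrossing, margin_of_ne (by omega)]
      refine (prevPt_eq_or_mem _ _ _).resolve_right fun hmem => ?_
      have := mem_crossings.1 hmem.1
      omega
    obtain ⟨c, hc, hc₁, hcN⟩ := hp.exists_mem_crossings (H := h 1) (k := 2) (m := N) (by omega)
      (by omega) le_rfl (by have := hp.finish; omega)
    have hnext : nextCrossing N h 1 ≤ c := nextPt_le_of_mem hc (by omega)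
    rw [force_of_mem hs]
    linarith
  · rw [force_of_notMem hs]

lemma force_last_nonneg (hp : IsBridge N h) : 0 ≤ force N h (N - 1) := by
  have := hp.reverse.force_one_nonpos
  rw [force_reverse] at this
  linarith

end IsBridge

/-- The interior times at which a path is at a local extremum. -/
noncomputable def extrema (N : ℤ) (h : ℤ → ℤ) : Finset ℤ :=
  {i ∈ Ioo 0 N | h (i - 1) = h (i + 1)}

/-- The local extrema with a straight neighbour: those whose reflection does not increase the number
of straight times. -/
noncomputable def movable (N : ℤ) (h : ℤ → ℤ) : Finset ℤ :=
  {j ∈ extrema N h | j - 1 ∈ straight N h ∨ j + 1 ∈ straight N h}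

/-- Reflection of the height at time `j` in the height at time `j - 1`: it exchanges the steps
before and after a local extremum `j`. -/
noncomputable def reflectAt (h : ℤ → ℤ) (j : ℤ) : ℤ → ℤ :=
  Function.update h j (2 * h (j - 1) - h j)

/-- The potential of a path: the number of pairs of cells separated by its crossings, summed over
all levels that it can cross. -/
noncomputable def potential (N : ℤ) (h : ℤ → ℤ) : ℕ :=
  ∑ H ∈ Ioo (-N) N, #(separatedPairs (-margin N H) (N + margin N H) (crossings N h H))

lemma mem_extrema : j ∈ extrema N h ↔ (0 < j ∧ j < N) ∧ h (j - 1) = h (j + 1) := by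
  simp [extrema]

lemma mem_movable :
    j ∈ movable N h ↔ j ∈ extrema N h ∧ (j - 1 ∈ straight N h ∨ j + 1 ∈ straight N h) := by
  simp [movable]

lemma notMem_straight_of_mem_extrema (hj : j ∈ extrema N h) : j ∉ straight N h :=
  fun hs => (mem_straight.1 hs).2 (mem_extrema.1 hj).2

lemma reflectAt_self (h : ℤ → ℤ) (j : ℤ) : reflectAt h j j = 2 * h (j - 1) - h j :=
  Function.update_self ..

lemma reflectAt_of_ne (h : ℤ → ℤ) (hij : i ≠ j) : reflectAt h j i = h i :=
  Function.update_of_ne hij ..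

lemma potential_le (hN : 0 ≤ N) (h : ℤ → ℤ) : (potential N h : ℤ) ≤ 18 * N ^ 3 := by
  have hlevel (H : ℤ) : (#(separatedPairs (-margin N H) (N + margin N H)
      (crossings N h H)) : ℤ) ≤ 9 * N ^ 2 := by
    have := margin_nonneg hN H
    have := margin_le hN H
    refine (card_separatedPairs_le (by linarith)).trans ?_
    nlinarith
  have hlevels : (#(Ioo (-N) N) : ℤ) ≤ 2 * N := by
    rw [Int.card_Ioo]; omega
  calc (potential N h : ℤ) ≤ #(Ioo (-N) N) * (9 * N ^ 2) := by
        rw [potential, Nat.cast_sum, ← nsmul_eq_mul]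
        exact sum_le_card_nsmul _ _ _ fun H _ => hlevel H
    _ ≤ 2 * N * (9 * N ^ 2) := by gcongr
    _ = 18 * N ^ 3 := by ring

lemma sum_Ioo_sub_telescope {G : Type*} [AddCommGroup G] (g : ℤ → G) (hN : 0 < N) :
    ∑ j ∈ Ioo 0 N, (g (j - 1) - g j) = g 0 - g (N - 1) := by
  induction N, Int.add_one_le_of_lt hN using Int.leInduction with
  | base => simp [show Ioo (0 : ℤ) 1 = ∅ from rfl]
  | succ N hN' ih =>
    have hN : 0 < N := by omega
    rw [show Ioo 0 (N + 1) = insert N (Ioo 0 N) by grind, sum_insert (by simp), ih hN,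
      add_sub_cancel_right]
    abel

namespace IsBridge

lemma straight_reflectAt (hp : IsBridge N h) (hj : j ∈ extrema N h) :
    straight N (reflectAt h j) = (straight N h ∆ {j - 1, j + 1}) ∩ Ioo 0 N := by
  obtain ⟨hj, hext⟩ := mem_extrema.1 hj
  have hstep := hp.step' (k := j) hj.1 hj.2.le
  ext i
  simp only [mem_inter, mem_symmDiff, mem_straight, mem_insert, mem_singleton, mem_Ioo]
  rcases eq_or_ne i (j - 1) with rfl | hi
  · have := fun hj₁ : 0 < j - 1 => hp.step' (k := j - 1) hj₁ (by omega)
    rw [sub_add_cancel, reflectAt_self, reflectAt_of_ne h (by omega)]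
    omega
  rcases eq_or_ne i (j + 1) with rfl | hi'
  · have := fun hj₁ : j + 1 < N => hp.step (j + 1) (by omega) hj₁
    rw [add_sub_cancel_right, reflectAt_self, reflectAt_of_ne h (by omega)]
    omega
  · rw [reflectAt_of_ne h (by omega), reflectAt_of_ne h (by omega)]
    tauto

lemma crossings_reflectAt_of_ne (hp : IsBridge N h) (hj : j ∈ extrema N h)
    (hH : H ≠ h (j - 1)) : crossings N (reflectAt h j) H = crossings N h H := by
  have hext := (mem_extrema.1 hj).2
  have := notMem_straight_of_mem_extrema hj
  ext i
  rw [crossings, crossings, hp.straight_reflectAt hj, mem_filter, mem_filter]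
  rcases eq_or_ne i j with rfl | hij
  · simp [mem_symmDiff, this, (sub_one_lt i).ne']
  · rw [reflectAt_of_ne h hij]
    grind [mem_symmDiff, mem_straight]

lemma crossings_reflectAt_self (hp : IsBridge N h) (hj : j ∈ extrema N h) :
    crossings N (reflectAt h j) (h (j - 1)) =
      (crossings N h (h (j - 1)) ∆ {j - 1, j + 1}) ∩ Ioo 0 N := by
  have hext := (mem_extrema.1 hj).2
  have := notMem_straight_of_mem_extrema hj
  ext i
  rw [crossings, crossings, hp.straight_reflectAt hj, mem_filter]
  rcases eq_or_ne i j with rfl | hij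
  · simp [mem_symmDiff, this, (sub_one_lt i).ne']
  · rw [reflectAt_of_ne h hij]
    grind [mem_symmDiff]

/-- A crossing moved to an end of the bridge is lost, but then it has reached the end of the window
of level `0`, where it separates nothing. -/
lemma separatedPairs_crossings_reflectAt (hp : IsBridge N h) (hj : j ∈ extrema N h) :
    separatedPairs (-margin N (h (j - 1))) (N + margin N (h (j - 1)))
        (crossings N (reflectAt h j) (h (j - 1))) =
      separatedPairs (-margin N (h (j - 1))) (N + margin N (h (j - 1)))
        (crossings N h (h (j - 1)) ∆ {j - 1, j + 1}) := by
  obtain ⟨hj', hext⟩ := mem_extrema.1 hj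
  refine separatedPairs_congr fun c hlo hhi => ?_
  rw [hp.crossings_reflectAt_self hj, mem_inter, and_iff_left_iff_imp]
  intro hc
  by_cases hz : h (j - 1) = 0
  · simpa [hz, margin] using And.intro hlo hhi
  · grind [mem_symmDiff, mem_crossings, hp.start, hp.finish]

lemma potential_reflectAt_sub_le (hp : IsBridge N h) (hj : j ∈ movable N h) :
    (potential N (reflectAt h j) : ℤ) - potential N h ≤
      2 * (force N h (j - 1) - force N h (j + 1)) - 4 := by
  obtain ⟨hj, hs⟩ := mem_movable.1 hj
  obtain ⟨hj', hext⟩ := mem_extrema.1 hj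
  have hlevel : h (j - 1) ∈ Ioo (-N) N := by
    have := abs_le.1 (hp.abs_apply_le (k := j - 1) (by omega) (by omega))
    rw [mem_Ioo]
    omega
  have hmargin := margin_nonneg (hj'.1.trans hj'.2).le (h (j - 1))
  rw [potential, potential, Nat.cast_sum, Nat.cast_sum, ← sum_sub_distrib,
    sum_eq_single_of_mem _ hlevel
      fun H _ hH => by rw [hp.crossings_reflectAt_of_ne hj hH, sub_self],
    hp.separatedPairs_crossings_reflectAt hj, force, force, ← hext]
  refine card_separatedPairs_symmDiff_le (by omega) (by omega) ?_ ?_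
  · exact fun hC => notMem_straight_of_mem_extrema hj (mem_filter.1 hC).1
  · rwa [mem_crossings_self, hext, mem_crossings_self]

/-- The summand at `j` is at most `u (j - 1) - u j`, where `u j` is the force at the first of the
times `j`, `j + 1` that may be straight; it vanishes along straight runs because the force is
antitone there. -/
lemma sum_force_sub_le (hp : IsBridge N h) (hN : 0 < N) :
    ∑ j ∈ movable N h, (force N h (j - 1) - force N h (j + 1)) ≤ 0 := by
  set u : ℤ → ℤ := fun j => if j ∈ straight N h then force N h j else force N h (j + 1) with hu
  have hext (j : ℤ) (hj : j ∈ extrema N h) :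
      force N h (j - 1) - force N h (j + 1) = u (j - 1) - u j := by
    have hj' := notMem_straight_of_mem_extrema hj
    grind [force_of_notMem]
  have hstraight (j : ℤ) (hj : j ∈ straight N h) : 0 ≤ u (j - 1) - u j := by
    have := hp.force_succ_le (i := j - 1)
    rw [sub_add_cancel] at this
    simp only [hu, hj, if_true, sub_add_cancel]
    split_ifs with hj'
    · exact sub_nonneg.2 (this hj' hj)
    · exact (sub_self _).ge
  have hfirst : u 0 ≤ 0 := by
    simpa [hu, mem_straight] using hp.force_one_nonpos
  have hlast : 0 ≤ u (N - 1) := by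
    have := hp.force_last_nonneg
    grind [force_of_notMem, mem_straight]
  calc ∑ j ∈ movable N h, (force N h (j - 1) - force N h (j + 1))
      = ∑ j ∈ extrema N h, (force N h (j - 1) - force N h (j + 1)) := by
        refine sum_filter_of_ne fun j _ hne => ?_
        by_contra! hj
        exact hne (by rw [force_of_notMem hj.1, force_of_notMem hj.2, sub_self])
    _ = ∑ j ∈ extrema N h, (u (j - 1) - u j) := sum_congr rfl hext
    _ ≤ ∑ j ∈ Ioo 0 N, (u (j - 1) - u j) := by
        refine sum_le_sum_of_subset_of_nonneg (filter_subset _ _) fun j hj hne => hstraight j ?_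
        grind [straight, extrema]
    _ = u 0 - u (N - 1) := sum_Ioo_sub_telescope u hN
    _ ≤ 0 := by linarith

theorem sum_potential_reflectAt_le (hp : IsBridge N h) (hN : 0 < N) :
    ∑ j ∈ movable N h, potential N (reflectAt h j) + 4 * #(movable N h) ≤
      #(movable N h) * potential N h := by
  have hsum := sum_le_sum fun j (hj : j ∈ movable N h) => hp.potential_reflectAt_sub_le hj
  simp only [sum_sub_distrib, ← mul_sum, sum_const, nsmul_eq_mul] at hsum
  have := hp.sum_force_sub_le hN
  rw [sum_sub_distrib] at this
  zify
  linarith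

lemma extrema_nonempty (hp : IsBridge N h) (hN : 1 < N) : (extrema N h).Nonempty := by
  obtain ⟨k, hk, hmax⟩ := exists_max_image (Icc 0 N) (fun i => |h i|) ⟨0, by simp; omega⟩
  have hone := hp.step 0 le_rfl (by omega)
  have hmax_one := hmax 1 (by simp; omega)
  rw [hp.start, zero_add] at hone
  have hk_pos : 0 < |h k| := by grind
  have hk' : 0 < k ∧ k < N := by grind [hp.start, hp.finish]
  have hstep := hp.step k (by omega) hk'.2
  have hstep' := hp.step' hk'.1 hk'.2.le
  have hmax_next := hmax (k + 1) (by simp; omega)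
  have hmax_prev := hmax (k - 1) (by simp; omega)
  exact ⟨k, mem_extrema.2 ⟨hk', by grind⟩⟩

/-- A straight time and an extremum at minimal distance are adjacent. -/
lemma movable_nonempty (hp : IsBridge N h) (hs : (straight N h).Nonempty) :
    (movable N h).Nonempty := by
  have hN : 1 < N := by
    obtain ⟨i, hi⟩ := hs
    have := mem_straight.1 hi
    omega
  obtain ⟨⟨s, e⟩, hse, hmin⟩ := exists_min_image (straight N h ×ˢ extrema N h)
    (fun z => (z.1 - z.2).natAbs) (hs.product (hp.extrema_nonempty hN))
  obtain ⟨hs, he⟩ := mem_product.1 hse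
  refine ⟨e, mem_movable.2 ⟨he, ?_⟩⟩
  have hs' := mem_straight.1 hs
  have he' := mem_extrema.1 he
  have hcases (i : ℤ) (hi : 0 < i) (hiN : i < N) : i ∈ straight N h ∨ i ∈ extrema N h := by
    grind [mem_straight, mem_extrema]
  have hmin' (s' e' : ℤ) (hs' : s' ∈ straight N h) (he' : e' ∈ extrema N h) :
      (s - e).natAbs ≤ (s' - e').natAbs := hmin (s', e') (mem_product.2 ⟨hs', he'⟩)
  by_contra! hmov
  rcases lt_trichotomy s e with hlt | rfl | hlt
  · have := hmin' s (e - 1) hs ((hcases (e - 1) (by omega) (by omega)).resolve_left hmov.1)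
    omega
  · exact notMem_straight_of_mem_extrema he hs
  · have := hmin' s (e + 1) hs ((hcases (e + 1) (by omega) (by omega)).resolve_left hmov.2)
    omega

lemma card_straight_reflectAt_le_iff (hp : IsBridge N h) (hs : (straight N h).Nonempty)
    (hj : j ∈ extrema N h) :
    #(straight N (reflectAt h j)) ≤ #(straight N h) ↔ j ∈ movable N h := by
  rw [hp.straight_reflectAt hj, mem_movable, and_iff_right hj]
  have hj' := mem_extrema.1 hj
  have := notMem_straight_of_mem_extrema hj
  refine ⟨fun hle => ?_, fun hadj => (card_le_card inter_subset_left).trans ?_⟩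
  · contrapose! hle
    refine card_lt_card (Finset.ssubset_iff_subset_ne.2 ⟨fun i hi => ?_, fun heq => ?_⟩)
    · have := mem_straight.1 hi
      grind [mem_symmDiff]
    · obtain ⟨i, hi⟩ := hs
      have := mem_straight.1 hi
      have hprev := Finset.ext_iff.1 heq (j - 1)
      have hnext := Finset.ext_iff.1 heq (j + 1)
      grind [mem_symmDiff]
  · rcases hadj with hprev | hnext
    · calc _ ≤ #(insert (j + 1) ((straight N h).erase (j - 1))) :=
            card_le_card (by grind [mem_symmDiff])
        _ ≤ #((straight N h).erase (j - 1)) + 1 := card_insert_le _ _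
        _ = #(straight N h) := card_erase_add_one hprev
    · calc _ ≤ #(insert (j - 1) ((straight N h).erase (j + 1))) :=
            card_le_card (by grind [mem_symmDiff])
        _ ≤ #((straight N h).erase (j + 1)) + 1 := card_insert_le _ _
        _ = #(straight N h) := card_erase_add_one hnext

end IsBridge

end Bridges

section Words

open Finset

variable {w : Word} {i n : ℕ}

/-- The height of the prefixes of a word, extended to integer times by constants. -/
def heightPath (w : Word) (z : ℤ) : ℤ := height w z.toNat

/-- The time at which the height path changes when the letters at positions `i` and `i + 1`, counted
from `0`, are exchanged. -/
def flipTime : ℕ ↪ ℤ := Nat.castEmbedding.trans (addRightEmbedding 1)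

lemma flipTime_apply (i : ℕ) : flipTime i = i + 1 := rfl

lemma map_flipTime {s : Finset ℕ} {t : Finset ℤ} (ht : ∀ j ∈ t, 0 < j)
    (hst : ∀ i, i ∈ s ↔ flipTime i ∈ t) : s.map flipTime = t := by
  ext j
  rw [mem_map]
  refine ⟨fun ⟨i, hi, hij⟩ => hij ▸ (hst i).1 hi, fun hj => ?_⟩
  obtain ⟨i, rfl⟩ : ∃ i, flipTime i = j :=
    ⟨(j - 1).toNat, by have := ht j hj; rw [flipTime_apply]; omega⟩
  exact ⟨i, (hst i).2 hj, rfl⟩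

lemma heightPath_natCast (w : Word) (k : ℕ) : heightPath w k = height w k := rfl

lemma height_append (u v : Word) (s : ℕ) :
    height (u ++ v) s = height u s + height v (s - u.length) := by
  simp only [height, List.take_append, List.count_append, Nat.cast_add]
  ring

lemma height_of_length_le {s : ℕ} (hs : w.length ≤ s) :
    height w s = w.count true - w.count false := by
  rw [height, List.take_of_length_le hs]

lemma height_succ (hi : i < w.length) :
    height w (i + 1) = height w i + if w.getD i true then 1 else -1 := by
  rw [List.getD_eq_getElem _ _ hi, height, height, List.take_add_one, List.getElem?_eq_getElem hi,
    List.count_append, List.count_append]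
  cases w[i] <;> simp <;> ring

lemma height_add_two (hi : i + 1 < w.length) :
    height w (i + 2) = height w i ↔ w.getD i true ≠ w.getD (i + 1) true := by
  rw [height_succ hi, height_succ (Nat.lt_of_succ_lt hi)]
  cases w.getD i true <;> cases w.getD (i + 1) true <;> simp <;> omega

lemma exists_append_flip_eq (hi : i + 1 < w.length) :
    ∃ u a b v, u.length = i ∧ w = u ++ a :: b :: v ∧ flip w i = u ++ b :: a :: v := by
  obtain ⟨u, a, b, v, rfl, rfl⟩ : ∃ u a b v, u.length = i ∧ w = u ++ a :: b :: v := by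
    refine ⟨w.take i, w[i], w[i + 1], w.drop (i + 2), List.length_take_of_le (by omega), ?_⟩
    rw [← List.drop_eq_getElem_cons, ← List.drop_eq_getElem_cons, List.take_append_drop]
  exact ⟨u, a, b, v, rfl, rfl, by simp [flip]⟩

lemma flip_perm (hi : i + 1 < w.length) : (flip w i).Perm w := by
  obtain ⟨u, a, b, v, -, hw, hflip⟩ := exists_append_flip_eq hi
  rw [hflip, hw]
  exact (List.Perm.swap a b v).append_left u

lemma IsConfig.flip (hw : IsConfig n w) (hi : i + 1 < w.length) : IsConfig n (flip w i) :=
  ⟨(flip_perm hi).length_eq.trans hw.1, ((flip_perm hi).count_eq true).trans hw.2⟩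

lemma height_flip_of_ne {s : ℕ} (hi : i + 1 < w.length) (hs : s ≠ i + 1) :
    height (flip w i) s = height w s := by
  obtain ⟨u, a, b, v, rfl, hw, hflip⟩ := exists_append_flip_eq hi
  rw [hflip, hw, height_append, height_append]
  congr 1
  match hk : s - u.length with
  | 0 => simp [height]
  | 1 => omega
  | k + 2 =>
    simp only [height, List.take_succ_cons, List.count_cons]
    push_cast
    ring

lemma height_flip_self (hi : CanFlip w i) :
    height (flip w i) (i + 1) = 2 * height w i - height w (i + 1) := by
  obtain ⟨u, a, b, v, rfl, hw, hflip⟩ := exists_append_flip_eq hi.1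
  have hab : a ≠ b := by simpa [hw] using hi.2
  rw [hflip, hw, height_append, height_append, height_append]
  cases a <;> cases b <;> simp [height, List.take_of_length_le] at hab ⊢ <;> ring

lemma heightPath_flip (hi : CanFlip w i) :
    heightPath (flip w i) = reflectAt (heightPath w) (flipTime i) := by
  funext z
  rcases eq_or_ne z (flipTime i) with rfl | hz
  · rw [reflectAt_self, flipTime_apply, add_sub_cancel_right]
    exact_mod_cast height_flip_self hi
  · rw [reflectAt_of_ne _ hz]
    rw [flipTime_apply] at hz
    exact height_flip_of_ne hi.1 (by omega)

lemma isBridge_heightPath (hw : IsConfig n w) : IsBridge w.length (heightPath w) where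
  start := by simp [heightPath, height]
  finish := by
    have hcount := w.count_true_add_count_false
    rw [hw.1, hw.2] at hcount
    rw [heightPath_natCast, height_of_length_le le_rfl, hw.2]
    omega
  step k hk hkw := by
    lift k to ℕ using hk
    rw [← Nat.cast_add_one, heightPath_natCast, heightPath_natCast, height_succ (by omega)]
    split_ifs <;> omega

lemma flipTime_mem_interior_iff : 0 < flipTime i ∧ flipTime i < w.length ↔ i + 1 < w.length := by
  rw [flipTime_apply]
  omega

lemma heightPath_flipTime_sub_one_eq_iff (hi : i + 1 < w.length) :
    heightPath w (flipTime i - 1) = heightPath w (flipTime i + 1) ↔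
      w.getD i true ≠ w.getD (i + 1) true := by
  rw [flipTime_apply, add_sub_cancel_right, ← height_add_two hi, eq_comm]
  exact_mod_cast Iff.rfl

lemma canFlip_iff_mem_extrema :
    CanFlip w i ↔ flipTime i ∈ extrema w.length (heightPath w) := by
  rw [CanFlip, mem_extrema, flipTime_mem_interior_iff]
  exact and_congr_right fun hi => (heightPath_flipTime_sub_one_eq_iff hi).symm

lemma mismatches_eq_card_filter (w : Word) :
    mismatches w = #{k ∈ range (w.length - 1) | w.getD k true = w.getD (k + 1) true} := by
  rw [card_filter]
  induction w with
  | nil => simp [mismatches]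
  | cons a w ih =>
    cases w with
    | nil => simp [mismatches]
    | cons b w =>
      have hcons : mismatches (a :: b :: w) = mismatches (b :: w) + if a = b then 1 else 0 := by
        simp [mismatches, List.countP_cons]
      rw [hcons, ih]
      simp only [List.length_cons, Nat.add_sub_cancel]
      rw [sum_range_succ']
      simp

lemma mismatches_eq_card_straight (w : Word) :
    mismatches w = #(straight w.length (heightPath w)) := by
  rw [mismatches_eq_card_filter, ← card_map flipTime]
  refine congrArg card (map_flipTime (fun j hj => (mem_straight.1 hj).1.1) fun k => ?_)
  rw [mem_filter, mem_range, mem_straight, flipTime_mem_interior_iff, Nat.lt_sub_iff_add_lt]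
  exact and_congr_right fun hk => by rw [Ne, heightPath_flipTime_sub_one_eq_iff hk, not_not]

lemma mem_allowedFlips :
    i ∈ allowedFlips w ↔ CanFlip w i ∧ mismatches (flip w i) ≤ mismatches w := by
  rw [allowedFlips, mem_filter, mem_range, and_iff_right_of_imp]
  exact fun h => Nat.lt_of_succ_lt h.1.1

lemma map_allowedFlips (hw : IsConfig n w) (hm : mismatches w ≠ 0) :
    (allowedFlips w).map flipTime = movable w.length (heightPath w) := by
  refine map_flipTime (fun j hj => (mem_extrema.1 (mem_movable.1 hj).1).1.1) fun i => ?_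
  rw [mismatches_eq_card_straight, card_ne_zero] at hm
  rw [mem_allowedFlips]
  by_cases hi : CanFlip w i
  · rw [and_iff_right hi, mismatches_eq_card_straight, mismatches_eq_card_straight,
      (flip_perm hi.1).length_eq, heightPath_flip hi]
    exact (isBridge_heightPath hw).card_straight_reflectAt_le_iff hm (canFlip_iff_mem_extrema.1 hi)
  · exact iff_of_false (fun h => hi h.1)
      fun h => hi (canFlip_iff_mem_extrema.2 (mem_movable.1 h).1)

lemma allowedFlips_nonempty (hw : IsConfig n w) (hm : mismatches w ≠ 0) :
    (allowedFlips w).Nonempty := by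
  rw [← map_nonempty (f := flipTime), map_allowedFlips hw hm]
  rw [mismatches_eq_card_straight, card_ne_zero] at hm
  exact (isBridge_heightPath hw).movable_nonempty hm

/-- The potential of the height path of a word. -/
noncomputable def wordPotential (w : Word) : ℕ := potential w.length (heightPath w)

lemma wordPotential_le (w : Word) : wordPotential w ≤ 18 * w.length ^ 3 := by
  have := potential_le (Nat.cast_nonneg w.length) (heightPath w)
  rw [wordPotential]
  exact_mod_cast this

theorem sum_wordPotential_flip_le (hw : IsConfig n w) (hm : mismatches w ≠ 0) :
    ∑ i ∈ allowedFlips w, wordPotential (flip w i) + 4 * #(allowedFlips w) ≤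
      #(allowedFlips w) * wordPotential w := by
  have hpos : 0 < w.length := by
    rw [List.length_pos_iff]
    rintro rfl
    exact hm rfl
  have hbridge := (isBridge_heightPath hw).sum_potential_reflectAt_le (Nat.cast_pos.2 hpos)
  rw [← map_allowedFlips hw hm, sum_map, card_map] at hbridge
  refine (add_le_add_left (sum_congr rfl fun i hi => ?_).le _).trans hbridge
  have hflip := (mem_allowedFlips.1 hi).1
  rw [wordPotential, heightPath_flip hflip, (flip_perm hflip.1).length_eq]

end Words

section Drift

open Finset

variable {α β : Type*}

/-- The expectation of a nonnegative function under a probability mass function. -/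
noncomputable def mean (p : PMF α) (V : α → ℝ≥0∞) : ℝ≥0∞ := ∑' a, p a * V a

lemma mean_mono (p : PMF α) {V W : α → ℝ≥0∞} (h : ∀ a, V a ≤ W a) : mean p V ≤ mean p W :=
  ENNReal.tsum_le_tsum fun a => mul_le_mul_right (h a) _

lemma mean_add (p : PMF α) (V W : α → ℝ≥0∞) :
    mean p (fun a => V a + W a) = mean p V + mean p W := by
  simp only [mean, mul_add, ENNReal.tsum_add]

lemma mean_indicator_const (p : PMF α) (S : Set α) (c : ℝ≥0∞) :
    mean p (S.indicator fun _ => c) = c * p.toOuterMeasure S := by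
  rw [mean, PMF.toOuterMeasure_apply, ← ENNReal.tsum_mul_left]
  refine tsum_congr fun a => ?_
  by_cases ha : a ∈ S <;> simp [ha, mul_comm]

lemma mean_pure (a : α) (V : α → ℝ≥0∞) : mean (PMF.pure a) V = V a := by
  rw [mean, tsum_eq_single a fun b hb => by simp [hb]]
  simp

lemma mean_bind (p : PMF α) (f : α → PMF β) (V : β → ℝ≥0∞) :
    mean (p.bind f) V = mean p fun a => mean (f a) V := by
  simp only [mean, PMF.bind_apply, ← ENNReal.tsum_mul_right, ← ENNReal.tsum_mul_left]
  rw [ENNReal.tsum_comm]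
  simp only [mul_assoc]

lemma mean_map (p : PMF α) (f : α → β) (V : β → ℝ≥0∞) :
    mean (p.map f) V = mean p fun a => V (f a) := by
  rw [← PMF.bind_pure_comp, mean_bind]
  simp only [Function.comp_apply, mean_pure]

lemma mean_uniformOfFinset (s : Finset α) (hs : s.Nonempty) (V : α → ℝ≥0∞) :
    mean (PMF.uniformOfFinset s hs) V = (#s : ℝ≥0∞)⁻¹ * ∑ a ∈ s, V a := by
  rw [mean, tsum_eq_sum (s := s), mul_sum]
  · exact sum_congr rfl fun a ha => by rw [PMF.uniformOfFinset_apply_of_mem hs ha]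
  · exact fun a ha => by rw [PMF.uniformOfFinset_apply_of_notMem hs ha, zero_mul]

lemma mean_uniformOfFinset_add_le {s : Finset α} (hs : s.Nonempty) {V : α → ℝ≥0∞} {c v : ℝ≥0∞}
    (h : ∑ a ∈ s, V a + c * #s ≤ #s * v) : mean (PMF.uniformOfFinset s hs) V + c ≤ v := by
  have hs₀ : (#s : ℝ≥0∞) ≠ 0 := Nat.cast_ne_zero.2 hs.card_ne_zero
  have hs₁ : (#s : ℝ≥0∞) ≠ ⊤ := ENNReal.natCast_ne_top _
  rw [mean_uniformOfFinset]
  calc (#s : ℝ≥0∞)⁻¹ * ∑ a ∈ s, V a + c = (#s : ℝ≥0∞)⁻¹ * (∑ a ∈ s, V a + c * #s) := by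
        rw [mul_add, mul_comm c, ENNReal.inv_mul_cancel_left hs₀ hs₁]
    _ ≤ (#s : ℝ≥0∞)⁻¹ * (#s * v) := by gcongr
    _ = v := ENNReal.inv_mul_cancel_left hs₀ hs₁

/-- The additive drift theorem; the sum on the left is the expected number of visits to `S`. -/
theorem mul_tsum_toOuterMeasure_le_mean {K : α → PMF α} {μ : ℕ → PMF α}
    (hμ : ∀ t, μ (t + 1) = (μ t).bind K) {V : α → ℝ≥0∞} {S : Set α} {c : ℝ≥0∞}
    (hV : ∀ a, mean (K a) V + S.indicator (fun _ => c) a ≤ V a) :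
    c * ∑' t, (μ t).toOuterMeasure S ≤ mean (μ 0) V := by
  have hstep (t : ℕ) : mean (μ (t + 1)) V + c * (μ t).toOuterMeasure S ≤ mean (μ t) V := by
    rw [hμ, mean_bind, ← mean_indicator_const, ← mean_add]
    exact mean_mono _ hV
  have hsum (T : ℕ) :
      mean (μ T) V + ∑ t ∈ range T, c * (μ t).toOuterMeasure S ≤ mean (μ 0) V := by
    induction T with
    | zero => simp
    | succ T ih =>
      rw [sum_range_succ_comm, ← add_assoc]
      exact (add_le_add_left (hstep T) _).trans ih
  rw [← ENNReal.tsum_mul_left, ENNReal.tsum_eq_iSup_nat]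
  exact iSup_le fun T => le_add_self.trans (hsum T)

end Drift

section Convergence

open Finset

variable {w : Word} {n : ℕ}

/-- The potential of a configuration as a function on all words. The additive drift theorem demands
its condition of every word, so words that are not configurations get the value `⊤`. -/
noncomputable def configPotential (n : ℕ) (w : Word) : ℝ≥0∞ :=
  if IsConfig n w then wordPotential w else ⊤

lemma configPotential_of_isConfig (hw : IsConfig n w) : configPotential n w = wordPotential w :=
  if_pos hw

lemma mean_coolStep_configPotential_le (n : ℕ) (w : Word) :
    mean (coolStep w) (configPotential n) + {v | mismatches v ≠ 0}.indicator (fun _ => 4) w ≤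
      configPotential n w := by
  by_cases hw : IsConfig n w
  · by_cases hm : mismatches w = 0
    · simp [coolStep, hm, mean_pure]
    · have hflips := allowedFlips_nonempty hw hm
      rw [coolStep, dif_pos ⟨hm, hflips⟩, mean_map, Set.indicator_of_mem hm,
        configPotential_of_isConfig hw]
      refine mean_uniformOfFinset_add_le hflips ?_
      rw [sum_congr rfl fun i hi =>
        configPotential_of_isConfig (hw.flip (mem_allowedFlips.1 hi).1.1)]
      exact_mod_cast sum_wordPotential_flip_le hw hm
  · simp [configPotential, hw]

theorem four_mul_expConvTime_le (hw : IsConfig n w) : 4 * expConvTime w ≤ wordPotential w := by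
  have := mul_tsum_toOuterMeasure_le_mean (μ := coolDist w) (fun _ => rfl)
    (mean_coolStep_configPotential_le n)
  rwa [coolDist, mean_pure, configPotential_of_isConfig hw] at this

end Convergence

/-- the worst expected convergence time of the cooling process is `O(n³)`. -/
theorem worst_expected_convergence_time_cubic :
    ∃ C : ℝ, 0 < C ∧ ∀ n : ℕ, 1 ≤ n → ∀ w : Word, IsConfig n w →
      expConvTime w ≤ ENNReal.ofReal (C * (n : ℝ) ^ 3) := by
  refine ⟨36, by norm_num, fun n _ w hw => ?_⟩
  have hpot : wordPotential w ≤ 4 * (36 * n ^ 3) := by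
    have := wordPotential_le w
    rw [hw.1] at this
    linarith
  have hexp : 4 * expConvTime w ≤ 4 * (36 * n ^ 3 : ℕ) :=
    (four_mul_expConvTime_le hw).trans (by exact_mod_cast hpot)
  rw [show (36 : ℝ) * n ^ 3 = (36 * n ^ 3 : ℕ) by push_cast; ring, ENNReal.ofReal_natCast]
  exact (ENNReal.mul_le_mul_iff_right (by norm_num) (by norm_num)).1 hexp

end Cooling
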